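/- Orthogonality of consensus-propagation messages along a path (four nodes): let l, l', l̃', l̃ be four pairwise-distinct vertices of the tree G such that l' is adjacent to l, l̃' is adjacent to l̃, and the unique path in G from l to l̃ visits l, l', …, l̃', l̃ in this order. Then for all rounds i' ≤ i and every inner iteration j ∈ {0,…,J}: ⟨P_{i,j}[l→l'], P_{i',j}[l̃→l̃']⟩ = 0. -/

import Mathlib

open MeasureTheory SimpleGraph
open scoped RealInnerProductSpace

/-!
In a forest, unrolling the recursion shows that the message sent from `l` to `l'` is a sum of
vectors `u k x` with `x` on the `l`-side of the edge `l l'`. Along a path `l, l', …, lt', lt` these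
sides grow, so the `l`-side of `l l'` lies in the `lt'`-side of `lt' lt`, which is disjoint from the
`lt`-side. The messages `l → l'` and `lt → lt'` are thus sums over disjoint sets of vertices,
hence orthogonal.
-/

/-- The vertices `x` joined to `l` by a path avoiding `l'`. For an edge `l l'` of a forest this is
the part lying on the side of `l` once the edge is removed, that is, the set of vertices whose
inputs can reach `l'` through a message sent by `l`. -/
def branch {𝓛 : Type*} (G : SimpleGraph 𝓛) (l l' : 𝓛) : Set 𝓛 :=
  {x | ∃ p : G.Walk x l, p.IsPath ∧ l' ∉ p.support}

section Branch

variable {𝓛 : Type*} {G : SimpleGraph 𝓛}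

theorem self_mem_branch {l l' : 𝓛} (h : l ≠ l') : l ∈ branch G l l' :=
  ⟨Walk.nil, Walk.IsPath.nil, by simpa using h.symm⟩

theorem isPath_append_cons_of_isAcyclic (hG : G.IsAcyclic) {x a b y : 𝓛} {p : G.Walk x a}
    {h : G.Adj a b} {q : G.Walk b y} (hp : (p.concat h).IsPath)
    (hq : (Walk.cons h q).IsPath) : (p.append (Walk.cons h q)).IsPath := by
  -- In a forest, being a path is a condition on consecutive edges only.
  rw [hG.isPath_iff_isChain] at hp hq ⊢
  rw [Walk.edges_concat, List.concat_eq_append] at hp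
  rw [Walk.edges_append, Walk.edges_cons]
  exact List.isChain_split.mpr ⟨hp, hq⟩

theorem branch_subset_of_isPath (hG : G.IsAcyclic) {l l' lt' lt : 𝓛} {h : G.Adj l l'}
    {q : G.Walk l' lt'} {h' : G.Adj lt' lt} (hq : (Walk.cons h (q.concat h')).IsPath) :
    branch G l l' ⊆ branch G lt' lt := by
  rintro x ⟨p, hp, hl'⟩
  have hglued : (p.append (Walk.cons h (q.concat h'))).IsPath :=
    isPath_append_cons_of_isAcyclic hG (hp.concat hl' h) hq
  rw [← Walk.concat_cons, Walk.append_concat, Walk.concat_isPath_iff] at hglued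
  exact ⟨p.append (Walk.cons h q), hglued⟩

theorem branch_subset_branch_of_adj (hG : G.IsAcyclic) {l'' l l' : 𝓛} (h : G.Adj l'' l)
    (h' : G.Adj l l') (hne : l'' ≠ l') : branch G l'' l ⊆ branch G l l' := by
  refine branch_subset_of_isPath hG (h := h) (q := Walk.nil) (h' := h') ?_
  simp [Walk.concat, Walk.cons_isPath_iff, h.ne, h'.ne, hne]

theorem disjoint_branch_swap (hG : G.IsAcyclic) {l l' : 𝓛} (h : G.Adj l l') :
    Disjoint (branch G l l') (branch G l' l) := by
  rw [Set.disjoint_left]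
  rintro x ⟨p, hp, hl'⟩ ⟨r, hr, hl⟩
  have heq : p.concat h = r :=
    congrArg Subtype.val
      ((hG.subsingleton_path x l').elim ⟨p.concat h, hp.concat hl' h⟩ ⟨r, hr⟩)
  apply hl
  rw [← heq, Walk.support_concat]
  simp

theorem disjoint_branch_of_isPath (hG : G.IsAcyclic) {l l' lt' lt : 𝓛} {h : G.Adj l l'}
    {q : G.Walk l' lt'} {h' : G.Adj lt' lt} (hq : (Walk.cons h (q.concat h')).IsPath) :
    Disjoint (branch G l l') (branch G lt lt') :=
  (disjoint_branch_swap hG h').mono_left (branch_subset_of_isPath hG hq)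

end Branch

/-- `P i j l l'` is the consensus-propagation message `P_{i,j}[l→l']` of round `i` after `j` of the
`J` inner iterations, for the inputs `u`. Only the values at adjacent `l`, `l'` and at `j ≤ J` are
constrained. -/
structure IsConsensusPropagation {𝓛 V : Type*} [DecidableEq 𝓛] [AddCommMonoid V]
    (G : SimpleGraph 𝓛) [G.LocallyFinite] (u : ℕ → 𝓛 → V) (J : ℕ)
    (P : ℕ → ℕ → 𝓛 → 𝓛 → V) : Prop where
  zero_zero : ∀ l l' : 𝓛, G.Adj l l' → P 0 0 l l' = 0
  succ_zero : ∀ (i : ℕ) (l l' : 𝓛), G.Adj l l' → P (i + 1) 0 l l' = P i J l l'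
  succ_right : ∀ (i j : ℕ), j < J → ∀ l l' : 𝓛, G.Adj l l' →
    P i (j + 1) l l' = u i l + ∑ l'' ∈ (G.neighborFinset l).erase l', P i j l'' l

namespace IsConsensusPropagation

variable {𝓛 V : Type*} [DecidableEq 𝓛] [AddCommMonoid V] {G : SimpleGraph 𝓛} [G.LocallyFinite]
  {u : ℕ → 𝓛 → V} {J : ℕ} {P : ℕ → ℕ → 𝓛 → 𝓛 → V}

theorem mem_of_forall_mem_zero (hP : IsConsensusPropagation G u J P)
    {S : 𝓛 → 𝓛 → AddSubmonoid V} {i : ℕ}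
    (hself : ∀ l l', G.Adj l l' → u i l ∈ S l l')
    (hmono : ∀ l'' l l', G.Adj l'' l → G.Adj l l' → l'' ≠ l' → S l'' l ≤ S l l')
    (hzero : ∀ l l', G.Adj l l' → P i 0 l l' ∈ S l l') {j : ℕ} (hj : j ≤ J) :
    ∀ l l', G.Adj l l' → P i j l l' ∈ S l l' := by
  induction j with
  | zero => exact hzero
  | succ j ih =>
    intro l l' h
    rw [hP.succ_right i j hj l l' h]
    refine add_mem (hself l l' h) (sum_mem fun l'' hl'' => ?_)
    rw [Finset.mem_erase, mem_neighborFinset] at hl''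
    obtain ⟨hne, hadj⟩ := hl''
    exact hmono l'' l l' hadj.symm h hne (ih (Nat.le_of_succ_le hj) l'' l hadj.symm)

theorem mem_of_forall_input_mem (hP : IsConsensusPropagation G u J P)
    {S : 𝓛 → 𝓛 → AddSubmonoid V}
    (hself : ∀ i l l', G.Adj l l' → u i l ∈ S l l')
    (hmono : ∀ l'' l l', G.Adj l'' l → G.Adj l l' → l'' ≠ l' → S l'' l ≤ S l l')
    (i : ℕ) {j : ℕ} (hj : j ≤ J) : ∀ l l', G.Adj l l' → P i j l l' ∈ S l l' := by
  induction i generalizing j with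
  | zero =>
    refine hP.mem_of_forall_mem_zero (hself 0) hmono (fun l l' h => ?_) hj
    rw [hP.zero_zero l l' h]
    exact zero_mem _
  | succ i ih =>
    refine hP.mem_of_forall_mem_zero (hself (i + 1)) hmono (fun l l' h => ?_) hj
    rw [hP.succ_zero i l l' h]
    exact ih le_rfl l l' h

theorem mem_closure_image2_branch (hP : IsConsensusPropagation G u J P) (hG : G.IsAcyclic)
    (i : ℕ) {j : ℕ} (hj : j ≤ J) {l l' : 𝓛} (h : G.Adj l l') :
    P i j l l' ∈ AddSubmonoid.closure (Set.image2 u Set.univ (branch G l l')) := by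
  refine hP.mem_of_forall_input_mem
    (S := fun l l' => AddSubmonoid.closure (Set.image2 u Set.univ (branch G l l')))
    (fun k l l' h => ?_) (fun l'' l l' h h' hne => ?_) i hj l l' h
  · exact AddSubmonoid.subset_closure
      (Set.mem_image2_of_mem (Set.mem_univ k) (self_mem_branch h.ne))
  · exact AddSubmonoid.closure_mono
      (Set.image2_subset_left (branch_subset_branch_of_adj hG h h' hne))

end IsConsensusPropagation

theorem isOrtho_span_image2_of_disjoint {ι 𝓛 𝕜 V : Type*} [RCLike 𝕜] [NormedAddCommGroup V]
    [InnerProductSpace 𝕜 V] {u : ι → 𝓛 → V}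
    (hu : ∀ i i' l l', l ≠ l' → inner 𝕜 (u i l) (u i' l') = 0) (I I' : Set ι) {s t : Set 𝓛}
    (hst : Disjoint s t) :
    Submodule.span 𝕜 (Set.image2 u I s) ⟂ Submodule.span 𝕜 (Set.image2 u I' t) := by
  rw [Submodule.isOrtho_span]
  rintro _ ⟨k, -, x, hx, rfl⟩ _ ⟨k', -, y, hy, rfl⟩
  exact hu k k' x y (hst.ne_of_mem hx hy)

theorem consensus_messages_orthogonal_path_four_general
    {𝓛 : Type*} [DecidableEq 𝓛] {G : SimpleGraph 𝓛} [G.LocallyFinite] (hG : G.IsAcyclic)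
    {𝕜 V : Type*} [RCLike 𝕜] [NormedAddCommGroup V] [InnerProductSpace 𝕜 V]
    {u : ℕ → 𝓛 → V} (hu : ∀ i i' l l', l ≠ l' → inner 𝕜 (u i l) (u i' l') = 0)
    {J : ℕ} {P : ℕ → ℕ → 𝓛 → 𝓛 → V} (hP : IsConsensusPropagation G u J P)
    {l l' lt' lt : 𝓛} {h1 : G.Adj l l'} {h2 : G.Adj lt' lt} {q : G.Walk l' lt'}
    (hq : (Walk.cons h1 (q.concat h2)).IsPath)
    (i i' : ℕ) {j j' : ℕ} (hj : j ≤ J) (hj' : j' ≤ J) :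
    inner 𝕜 (P i j l l') (P i' j' lt lt') = 0 := by
  have hspan {i j : ℕ} (hj : j ≤ J) {a b : 𝓛} (h : G.Adj a b) :
      P i j a b ∈ Submodule.span 𝕜 (Set.image2 u Set.univ (branch G a b)) :=
    Submodule.closure_le_toAddSubmonoid_span (hP.mem_closure_image2_branch hG i hj h)
  have hortho := isOrtho_span_image2_of_disjoint hu Set.univ Set.univ
    (disjoint_branch_of_isPath hG hq)
  exact hortho.inner_eq (hspan hj h1) (hspan hj' h2.symm)

/-- Orthogonality of consensus-propagation messages along a path
(four nodes): if `l, l', lt', lt` are pairwise distinct vertices of a tree `G` with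
`l ~ l'`, `lt' ~ lt`, and the unique path from `l` to `lt` visits `l, l', …, lt', lt`
in this order, then for all rounds `i' ≤ i` and inner iterations `j ≤ J`,
`⟪P_{i,j}[l→l'], P_{i',j}[lt→lt']⟫ = 0`. -/
theorem consensus_messages_orthogonal_path_four
    {𝓛 : Type*} [Fintype 𝓛] [DecidableEq 𝓛] (G : SimpleGraph 𝓛) [DecidableRel G.Adj]
    (hG : G.IsTree)
    {V : Type*} [NormedAddCommGroup V] [InnerProductSpace ℝ V]
    (u : ℕ → 𝓛 → V)
    (hu : ∀ i i' : ℕ, ∀ l l' : 𝓛, l ≠ l' → ⟪u i l, u i' l'⟫ = 0)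
    (J : ℕ) (P : ℕ → ℕ → 𝓛 → 𝓛 → V)
    (hP00 : ∀ l l' : 𝓛, G.Adj l l' → P 0 0 l l' = 0)
    (hPinit : ∀ (i : ℕ) (l l' : 𝓛), G.Adj l l' → P (i + 1) 0 l l' = P i J l l')
    (hPstep : ∀ (i j : ℕ), j < J → ∀ l l' : 𝓛, G.Adj l l' →
      P i (j + 1) l l' = u i l + ∑ l'' ∈ (G.neighborFinset l).erase l', P i j l'' l)
    (l l' lt' lt : 𝓛)
    (hdistinct : List.Pairwise (· ≠ ·) [l, l', lt', lt])
    (h1 : G.Adj l l') (h2 : G.Adj lt' lt)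
    (q : G.Walk l' lt')
    (hq : (SimpleGraph.Walk.cons h1 (q.concat h2)).IsPath)
    (i i' : ℕ) (hii : i' ≤ i) (j : ℕ) (hj : j ≤ J) :
    ⟪P i j l l', P i' j lt lt'⟫ = 0 :=
  consensus_messages_orthogonal_path_four_general hG.isAcyclic hu ⟨hP00, hPinit, hPstep⟩ hq i i'
    hj hj
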